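/- Let u ≥ 0 and n ≥ 1 be integers, let R = ∏_{p prime} ℤ_p, and let A be a random n×(n+u) matrix over R whose entries are independent and identically distributed according to the Haar probability measure on R. Then P(A : R^(n+u) → R^n is surjective) = ∏_{k=u+1}^{n+u} ∏_{p prime} (1 − p^(−k)); in particular, when u ≥ 1 this equals ∏_{k=u+1}^{n+u} ζ(k)^(−1), where ζ is the Riemann zeta function, and when u = 0 it equals 0. -/

import Mathlib

open MeasureTheory Filter

instance (p : Nat.Primes) : Fact (Nat.Prime (p : ℕ)) := ⟨p.2⟩

noncomputable instance (p : ℕ) [Fact p.Prime] : MeasurableSpace ℤ_[p] := borel _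

instance (p : ℕ) [Fact p.Prime] : BorelSpace ℤ_[p] := ⟨rfl⟩

/-- The product of the rings of `p`-adic integers over all primes `p`
(isomorphic to the profinite completion of `ℤ`). -/
abbrev Zhat : Type := ∀ p : Nat.Primes, ℤ_[(p : ℕ)]

/-!
Over a product of rings a matrix is surjective iff each of its components is, and over a local ring
iff its reduction to the residue field has linearly independent rows, since a right inverse of the
reduction lifts to a matrix `C` for which `det (M * C)` is a unit. The joint reduction of a
left-invariant random matrix modulo finitely many primes is a surjective homomorphism to a finite
group, hence uniform. So the events at distinct primes are independent, and the one at `p` has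
probability `∏ i < n, (p ^ (n + u) - p ^ i) / p ^ (n + u)`. Intersecting over all primes gives the
product formula; its factors are inverse Euler products of `ζ`, except for `k = 1`, where the
product vanishes because the sum of the reciprocals of the primes diverges.
-/

open ProbabilityTheory

section SurjectiveMatrices

variable {m n : Type*} [Finite m] [Fintype n]

lemma mulVec_surjective_iff_linearIndependent_row {K : Type*} [Field K] {M : Matrix m n K} :
    Function.Surjective M.mulVec ↔ LinearIndependent K M.row := by
  have := Fintype.ofFinite m
  rw [linearIndependent_iff_card_eq_finrank_span, Set.finrank, ← M.rank_eq_finrank_span_row,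
    eq_comm, ← Module.finrank_fintype_fun_eq_card K, Matrix.rank, ← Submodule.eq_top_iff_finrank_eq]
  exact (LinearMap.range_eq_top (f := M.mulVecLin)).symm

lemma mulVec_surjective_map_iff_of_isLocalHom {R S : Type*} [CommRing R] [CommRing S]
    (f : R →+* S) [IsLocalHom f] (hf : Function.Surjective f) {M : Matrix m n R} :
    Function.Surjective (M.map f).mulVec ↔ Function.Surjective M.mulVec := by
  classical
  have := Fintype.ofFinite m
  simp only [Matrix.mulVec_surjective_iff_exists_right_inverse]
  constructor
  · rintro ⟨B, hB⟩
    obtain ⟨C, rfl⟩ : ∃ C : Matrix n m R, C.map f = B :=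
      ⟨B.map (Function.surjInv hf), by ext; simp [Function.surjInv_eq]⟩
    have hdet : IsUnit (M * C).det := by
      refine IsUnit.of_map f _ ?_
      rw [f.map_det, RingHom.mapMatrix_apply, Matrix.map_mul, hB, Matrix.det_one]
      exact isUnit_one
    exact ⟨C * (M * C)⁻¹, by rw [← Matrix.mul_assoc, Matrix.mul_nonsing_inv _ hdet]⟩
  · rintro ⟨B, hB⟩
    exact ⟨B.map f, by rw [← Matrix.map_mul, hB, Matrix.map_one _ f.map_zero f.map_one]⟩

lemma mulVec_surjective_pi_iff {ι : Type*} {R : ι → Type*} [∀ i, Semiring (R i)]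
    {M : Matrix m n (∀ i, R i)} :
    Function.Surjective M.mulVec ↔ ∀ i, Function.Surjective (M.map fun x => x i).mulVec := by
  classical
  have := Fintype.ofFinite m
  simp only [Matrix.mulVec_surjective_iff_exists_right_inverse]
  constructor
  · rintro ⟨B, hB⟩ i
    refine ⟨B.map (Pi.evalRingHom R i), ?_⟩
    change M.map (Pi.evalRingHom R i) * B.map (Pi.evalRingHom R i) = 1
    rw [← Matrix.map_mul, hB, Matrix.map_one _ (map_zero _) (map_one _)]
  · intro h
    choose B hB using h
    refine ⟨Matrix.of fun j k i => B i j k, ?_⟩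
    ext j k i
    simpa [Matrix.mul_apply, Matrix.one_apply, apply_ite (fun x : ∀ i, R i => x i)] using
      congrFun₂ (hB i) j k

lemma mulVec_surjective_pi_iff_linearIndependent_row {ι : Type*} {R K : ι → Type*}
    [∀ i, CommRing (R i)] [∀ i, Field (K i)] (f : ∀ i, R i →+* K i) [∀ i, IsLocalHom (f i)]
    (hf : ∀ i, Function.Surjective (f i)) {M : Matrix m n (∀ i, R i)} :
    Function.Surjective M.mulVec ↔
      ∀ i, LinearIndependent (K i) (M.map fun x => f i (x i)).row := by
  rw [mulVec_surjective_pi_iff]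
  refine forall_congr' fun i => ?_
  rw [← mulVec_surjective_map_iff_of_isLocalHom (f i) (hf i), Matrix.map_map,
    mulVec_surjective_iff_linearIndependent_row]
  rfl

end SurjectiveMatrices

section CountingMatrices

lemma prod_range_sub_eq_prod_Icc {M : Type*} [CommMonoid M] (f : ℕ → M) (u n : ℕ) :
    ∏ i ∈ Finset.range n, f (n + u - i) = ∏ k ∈ Finset.Icc (u + 1) (n + u), f k := by
  refine Finset.prod_nbij' (n + u - ·) (n + u - ·) ?_ ?_ ?_ ?_ fun _ _ => rfl <;>
    simp only [Finset.mem_range, Finset.mem_Icc] <;> omega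

lemma card_linearIndependent_div_card (K : Type*) [Field K] [Finite K] (u n : ℕ) :
    (Nat.card {M : Fin n → Fin (n + u) → K // LinearIndependent K M} : ℝ) /
        Nat.card (Fin n → Fin (n + u) → K) =
      ∏ k ∈ Finset.Icc (u + 1) (n + u), (1 - (Nat.card K : ℝ)⁻¹ ^ k) := by
  have := Fintype.ofFinite K
  have hq : (Nat.card K : ℝ) ≠ 0 := Nat.cast_ne_zero.2 Nat.card_pos.ne'
  have hcard : Nat.card {M : Fin n → Fin (n + u) → K // LinearIndependent K M} =
      ∏ i : Fin n, (Nat.card K ^ (n + u) - Nat.card K ^ i.val) := by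
    simpa using card_linearIndependent (K := K) (V := Fin (n + u) → K) (k := n) (by simp)
  have htotal : Nat.card (Fin n → Fin (n + u) → K) = ∏ _i : Fin n, Nat.card K ^ (n + u) := by
    simp
  rw [hcard, htotal, Nat.cast_prod, Nat.cast_prod, ← Finset.prod_div_distrib,
    ← prod_range_sub_eq_prod_Icc, ← Fin.prod_univ_eq_prod_range]
  refine Finset.prod_congr rfl fun i _ => ?_
  have hi : (i : ℕ) ≤ n + u := by omega
  rw [Nat.cast_sub (Nat.pow_le_pow_right Nat.card_pos hi), Nat.cast_pow, Nat.cast_pow, inv_pow,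
    pow_sub₀ _ hq hi]
  field_simp

end CountingMatrices

section InvariantMeasures

variable {G H : Type*} [AddGroup G] [MeasurableSpace G] [MeasurableAdd G] [AddGroup H] [Finite H]
  [MeasurableSpace H] [MeasurableSingletonClass H]

lemma measure_eq_card_div_card_of_isAddLeftInvariant (ν : Measure H) [IsProbabilityMeasure ν]
    [ν.IsAddLeftInvariant] (T : Set H) : ν T = Nat.card T / Nat.card H := by
  have hsingleton (h : H) : ν {h} = ν {0} := by
    rw [← measure_preimage_add ν h {h}]
    congr 1
    ext x
    simp
  have hmul (S : Set H) : ν S = Nat.card S * ν {0} := by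
    lift S to Finset H using S.toFinite
    rw [← sum_measure_singleton, Finset.sum_congr rfl fun h _ => hsingleton h]
    simp
  have htotal : (Nat.card H : ENNReal) * ν {0} = 1 := by
    rw [← measure_univ (μ := ν), hmul Set.univ, Nat.card_univ]
  rw [hmul T, ENNReal.eq_inv_of_mul_eq_one_left ((mul_comm _ _).trans htotal), div_eq_mul_inv]

lemma measure_preimage_eq_card_div_card (ν : Measure G) [IsProbabilityMeasure ν]
    [ν.IsAddLeftInvariant] {φ : G →+ H} (hφ : Measurable φ) (hs : Function.Surjective φ)
    (T : Set H) : ν (φ ⁻¹' T) = Nat.card T / Nat.card H := by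
  have : (ν.map φ).IsAddLeftInvariant := isAddLeftInvariant_map (φ : G →ₙ+ H) hφ hs
  have := Measure.isProbabilityMeasure_map (μ := ν) hφ.aemeasurable
  rw [← Measure.map_apply hφ T.toFinite.measurableSet]
  exact measure_eq_card_div_card_of_isAddLeftInvariant (ν.map φ) T

lemma iIndepFun_of_surjective_pi {ι : Type*} {E : ι → Type*} [∀ i, AddGroup (E i)]
    [∀ i, Finite (E i)] [∀ i, MeasurableSpace (E i)] [∀ i, MeasurableSingletonClass (E i)]
    (ν : Measure G) [IsProbabilityMeasure ν] [ν.IsAddLeftInvariant] {φ : ∀ i, G →+ E i}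
    (hφ : ∀ i, Measurable (φ i)) (hs : Function.Surjective fun g i => φ i g) :
    iIndepFun (fun i => φ i) ν := by
  classical
  rw [iIndepFun_iff_measure_inter_preimage_eq_mul]
  intro F T _
  let Φ : G →+ ∀ i : F, E i := AddMonoidHom.pi fun i : F => φ i
  have hΦ : Measurable Φ := measurable_pi_lambda _ fun i => hφ i
  have hΦs : Function.Surjective Φ := (Subtype.surjective_restrict (· ∈ F)).comp hs
  have hi (i : ι) : Function.Surjective (φ i) := (Function.surjective_eval i).comp hs
  have hpre : ⋂ i ∈ F, φ i ⁻¹' T i = Φ ⁻¹' Set.univ.pi fun i : F => T i := by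
    ext g
    simp only [Φ, Set.mem_iInter, Set.mem_preimage, Set.mem_univ_pi, Subtype.forall,
      AddMonoidHom.pi_apply]
  have hcard : Nat.card (Set.univ.pi fun i : F => T i) = ∏ i : F, Nat.card (T i) := by
    rw [← Nat.card_pi]
    exact Nat.card_congr (Equiv.Set.univPi _)
  rw [hpre, measure_preimage_eq_card_div_card ν hΦ hΦs, hcard, Nat.card_pi, Nat.cast_prod,
    Nat.cast_prod, ← ENNReal.prod_div_distrib_of_ne_top (by simp)]
  simp only [measure_preimage_eq_card_div_card ν (hφ _) (hi _)]
  exact F.prod_coe_sort fun i => (Nat.card (T i) / Nat.card (E i) : ENNReal)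

end InvariantMeasures

lemma hasProd_measureReal_iInter_of_iIndepSet {ι Ω : Type*} [Countable ι] [MeasurableSpace Ω]
    {ν : Measure Ω} {s : ι → Set Ω} (hs : ∀ i, MeasurableSet (s i)) (hind : iIndepSet s ν) :
    HasProd (fun i => ν.real (s i)) (ν.real (⋂ i, s i)) := by
  have := hind.isProbabilityMeasure
  have hlim := tendsto_measure_iInter_atTop (μ := ν) (s := fun F : Finset ι => ⋂ i ∈ F, s i)
    (fun F => (F.measurableSet_biInter fun i _ => hs i).nullMeasurableSet)
    (fun _ _ hFG => Set.biInter_subset_biInter_left hFG) ⟨∅, measure_ne_top ν _⟩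
  rw [← Set.iInter_eq_iInter_finset] at hlim
  refine ((ENNReal.tendsto_toReal (measure_ne_top ν _)).comp hlim).congr fun F => ?_
  change ν.real (⋂ i ∈ F, s i) = ∏ i ∈ F, ν.real (s i)
  simp only [measureReal_def, (iIndepSet_iff_meas_biInter hs).1 hind F, ENNReal.toReal_prod]

section RandomMatrices

variable {ι : Type*} {R K : ι → Type*}

section Reduction

variable [∀ i, NonAssocSemiring (R i)] [∀ i, NonAssocSemiring (K i)]

/-- Entrywise reduction of a matrix over `∏ i, R i` to a matrix over `K i`, as a map of additive
groups. Matrices are plain functions, so that they carry the product measurable structure. -/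
def reductionHom (f : ∀ i, R i →+* K i) (m n : Type*) (i : ι) :
    (m → n → ∀ i, R i) →+ (m → n → K i) :=
  (((f i).toAddMonoidHom.comp (Pi.evalAddMonoidHom R i)).compLeft n).compLeft m

@[simp]
lemma reductionHom_apply (f : ∀ i, R i →+* K i) {m n : Type*} (i : ι) (A : m → n → ∀ i, R i)
    (j : m) (k : n) : reductionHom f m n i A j k = f i (A j k i) :=
  rfl

lemma reductionHom_pi_surjective {f : ∀ i, R i →+* K i} (hf : ∀ i, Function.Surjective (f i))
    (m n : Type*) : Function.Surjective fun A i => reductionHom f m n i A := fun B =>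
  ⟨fun j k i => Function.surjInv (hf i) (B i j k), by
    ext i j k
    simp [Function.surjInv_eq]⟩

lemma measurable_reductionHom [∀ i, MeasurableSpace (R i)] [∀ i, MeasurableSpace (K i)]
    {f : ∀ i, R i →+* K i} (hf : ∀ i, Measurable (f i)) (m n : Type*) (i : ι) :
    Measurable (reductionHom f m n i) := by
  refine measurable_pi_lambda _ fun j => measurable_pi_lambda _ fun k => ?_
  simp only [reductionHom_apply]
  fun_prop

end Reduction

theorem hasProd_measureReal_mulVec_surjective [Countable ι] [∀ i, CommRing (R i)]
    [∀ i, MeasurableSpace (R i)] [∀ i, MeasurableAdd (R i)] [∀ i, Field (K i)] [∀ i, Finite (K i)]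
    [∀ i, MeasurableSpace (K i)] [∀ i, MeasurableSingletonClass (K i)]
    (f : ∀ i, R i →+* K i) [∀ i, IsLocalHom (f i)]
    (hf : ∀ i, Function.Surjective (f i)) (hfm : ∀ i, Measurable (f i))
    (μ : Measure (∀ i, R i)) [IsProbabilityMeasure μ] [μ.IsAddLeftInvariant] (u n : ℕ) :
    HasProd (fun i => ∏ k ∈ Finset.Icc (u + 1) (n + u), (1 - (Nat.card (K i) : ℝ)⁻¹ ^ k))
      ((Measure.pi fun _ : Fin n => Measure.pi fun _ : Fin (n + u) => μ).real
        {A | Function.Surjective (Matrix.of A).mulVec}) := by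
  set ν := Measure.pi fun _ : Fin n => Measure.pi fun _ : Fin (n + u) => μ
  have : (Measure.pi fun _ : Fin (n + u) => μ).IsAddLeftInvariant :=
    Measure.pi.isAddLeftInvariant _
  have : ν.IsAddLeftInvariant := Measure.pi.isAddLeftInvariant _
  let φ := reductionHom f (Fin n) (Fin (n + u))
  let T (i : ι) : Set (Fin n → Fin (n + u) → K i) := {M | LinearIndependent (K i) M}
  have hφ (i : ι) : Measurable (φ i) := measurable_reductionHom hfm _ _ i
  have hs : Function.Surjective fun A i => φ i A := reductionHom_pi_surjective hf _ _
  have hmeas (i : ι) : MeasurableSet (φ i ⁻¹' T i) := hφ i (T i).toFinite.measurableSet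
  have hind : iIndepSet (fun i => φ i ⁻¹' T i) ν :=
    (iIndepSet_iff_meas_biInter hmeas).2 fun F =>
      (iIndepFun_of_surjective_pi ν hφ hs).meas_biInter fun i _ =>
        ⟨T i, (T i).toFinite.measurableSet, rfl⟩
  have hprob (i : ι) : ν.real (φ i ⁻¹' T i) =
      ∏ k ∈ Finset.Icc (u + 1) (n + u), (1 - (Nat.card (K i) : ℝ)⁻¹ ^ k) := by
    rw [measureReal_def, measure_preimage_eq_card_div_card ν (hφ i)
      ((Function.surjective_eval i).comp hs), ENNReal.toReal_div, ENNReal.toReal_natCast,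
      ENNReal.toReal_natCast]
    exact card_linearIndependent_div_card (K i) u n
  have hset : {A | Function.Surjective (Matrix.of A).mulVec} = ⋂ i, φ i ⁻¹' T i := by
    ext A
    rw [Set.mem_iInter]
    exact mulVec_surjective_pi_iff_linearIndependent_row f hf
  rw [hset, ← funext hprob]
  exact hasProd_measureReal_iInter_of_iIndepSet hmeas hind

end RandomMatrices

lemma measurable_toZMod (p : ℕ) [Fact p.Prime] :
    Measurable (PadicInt.toZMod : ℤ_[p] →+* ZMod p) := by
  refine measurable_to_countable fun x => ?_
  have hball : PadicInt.toZMod ⁻¹' {PadicInt.toZMod x} = Metric.ball x 1 := by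
    ext y
    rw [Set.mem_preimage, Set.mem_singleton_iff, ← sub_eq_zero, ← map_sub, ← RingHom.mem_ker,
      PadicInt.ker_toZMod, IsLocalRing.mem_maximalIdeal, PadicInt.mem_nonunits, mem_ball_iff_norm]
  rw [hball]
  exact measurableSet_ball

section InfiniteProducts

lemma multipliable_of_nonneg_of_le_one {ι : Type*} {f : ι → ℝ} (h₀ : ∀ i, 0 ≤ f i)
    (h₁ : ∀ i, f i ≤ 1) : Multipliable f := by
  have hbdd : BddBelow (Set.range fun s : Finset ι => ∏ i ∈ s, f i) :=
    ⟨0, Set.forall_mem_range.2 fun s => Finset.prod_nonneg fun i _ => h₀ i⟩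
  exact ⟨_, tendsto_atTop_ciInf (Finset.prod_anti_set_of_le_one h₀ h₁) hbdd⟩

lemma hasProd_one_sub_zero_of_not_summable {ι : Type*} {f : ι → ℝ} (h₀ : ∀ i, 0 ≤ f i)
    (h₁ : ∀ i, f i ≤ 1) (hf : ¬ Summable f) : HasProd (fun i => 1 - f i) 0 := by
  have hmono : Monotone fun s : Finset ι => ∑ i ∈ s, f i := fun _ _ hst =>
    Finset.sum_le_sum_of_subset_of_nonneg hst fun i _ _ => h₀ i
  have hsum : Tendsto (fun s : Finset ι => ∑ i ∈ s, f i) atTop atTop :=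
    (tendsto_atTop_of_monotone hmono).resolve_right fun ⟨l, hl⟩ => hf ⟨l, hl⟩
  have hnonneg (i : ι) : 0 ≤ 1 - f i := sub_nonneg.2 (h₁ i)
  refine squeeze_zero (fun s => Finset.prod_nonneg fun i _ => hnonneg i) (fun s => ?_)
    (Real.tendsto_exp_neg_atTop_nhds_zero.comp hsum)
  calc ∏ i ∈ s, (1 - f i)
      ≤ ∏ i ∈ s, Real.exp (-f i) :=
        Finset.prod_le_prod (fun i _ => hnonneg i) fun i _ => Real.one_sub_le_exp_neg _
    _ = Real.exp (-∑ i ∈ s, f i) := by rw [← Real.exp_sum, Finset.sum_neg_distrib]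

lemma multipliable_one_sub_prime_inv_pow (k : ℕ) :
    Multipliable fun p : Nat.Primes => 1 - ((p : ℕ) : ℝ)⁻¹ ^ k :=
  multipliable_of_nonneg_of_le_one
    (fun p => sub_nonneg.2 <| pow_le_one₀ (by positivity) (Nat.cast_inv_le_one _))
    fun p => sub_le_self _ (by positivity)

lemma tprod_one_sub_prime_inv : ∏' p : Nat.Primes, (1 - ((p : ℕ) : ℝ)⁻¹) = 0 :=
  (hasProd_one_sub_zero_of_not_summable (fun p => by positivity)
    (fun p => Nat.cast_inv_le_one _)
    (by simpa only [one_div] using Nat.Primes.not_summable_one_div)).tprod_eq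

lemma ofReal_tprod_one_sub_prime_inv_pow {k : ℕ} (hk : 1 < k) :
    ((∏' p : Nat.Primes, (1 - ((p : ℕ) : ℝ)⁻¹ ^ k) : ℝ) : ℂ) = (riemannZeta k)⁻¹ := by
  have hre : 1 < (k : ℂ).re := by simpa using hk
  have heuler := (riemannZeta_eulerProduct_hasProd hre).inv₀ (riemannZeta_ne_zero_of_one_lt_re hre)
  refine ((multipliable_one_sub_prime_inv_pow k).hasProd.map Complex.ofRealHom
    Complex.continuous_ofReal).unique (heuler.congr_fun fun p => ?_)
  simp [Complex.cpow_neg]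

end InfiniteProducts

theorem stmt11 (u n : ℕ) (hn : 1 ≤ n) (μ : Measure Zhat)
    [IsProbabilityMeasure μ] [μ.IsAddHaarMeasure] :
    ((Measure.pi fun _ : Fin n => Measure.pi fun _ : Fin (n + u) => μ)
        {A | Function.Surjective (Matrix.of A).mulVecLin}).toReal =
      ∏ k ∈ Finset.Icc (u + 1) (n + u), ∏' p : Nat.Primes, (1 - ((p : ℕ) : ℝ)⁻¹ ^ k) ∧
    (1 ≤ u →
      ((∏ k ∈ Finset.Icc (u + 1) (n + u),
          ∏' p : Nat.Primes, (1 - ((p : ℕ) : ℝ)⁻¹ ^ k) : ℝ) : ℂ) =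
        ∏ k ∈ Finset.Icc (u + 1) (n + u), (riemannZeta (k : ℂ))⁻¹) ∧
    (u = 0 →
      ((Measure.pi fun _ : Fin n => Measure.pi fun _ : Fin (n + u) => μ)
        {A | Function.Surjective (Matrix.of A).mulVecLin}).toReal = 0) := by
  have hlocal (p : Nat.Primes) : IsLocalHom (PadicInt.toZMod : ℤ_[(p : ℕ)] →+* ZMod p) :=
    (ZMod.ringHom_surjective _).isLocalHom
  have hprob := hasProd_measureReal_mulVec_surjective
    (fun p : Nat.Primes => (PadicInt.toZMod : ℤ_[(p : ℕ)] →+* ZMod p))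
    (fun p => ZMod.ringHom_surjective _) (fun p => measurable_toZMod p) μ u n
  simp only [Nat.card_zmod] at hprob
  have hprod := hprob.unique
    (hasProd_prod fun k _ => (multipliable_one_sub_prime_inv_pow k).hasProd)
  refine ⟨hprod, fun hu => ?_, fun hu => ?_⟩
  · rw [Complex.ofReal_prod]
    refine Finset.prod_congr rfl fun k hk => ofReal_tprod_one_sub_prime_inv_pow ?_
    exact (Nat.lt_add_of_pos_left hu).trans_le (Finset.mem_Icc.1 hk).1
  · refine hprod.trans (Finset.prod_eq_zero (i := 1) (Finset.mem_Icc.2 (by omega)) ?_)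
    simpa only [pow_one] using tprod_one_sub_prime_inv
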